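/- Let 0 ≤ r1, r2 ≤ n and 0 ≤ s ≤ min(r1, n − r1, r2, n − r2). Then for every integer k: ω^{r1,r2}(k; n) · λ_s^{r1,r2}(k; n) = ([n]_{2s} / ([n−r1]_s [r2]_s)) · Σ_{j=0}^s (−1)^j binom(s, j) · ω^{r1−s, r2−s}(k − j; n − 2s). (This is the Rodrigues formula: ω^{r1,r2}(·;n) λ_s^{r1,r2}(·;n) = ([n]_{2s}/([n−r1]_s[r2]_s)) ∇^s ω^{r1−s,r2−s}(·; n−2s), where ∇h(k) = h(k) − h(k−1).) -/

import Mathlib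

/-- Falling factorial `z(z-1)⋯(z-k+1)` for complex `z`. -/
noncomputable def cfall (z : ℂ) (k : ℕ) : ℂ := ∏ i ∈ Finset.range k, (z - i)

/-- Generalized binomial coefficient `binom(t, j)` for complex `t`. -/
noncomputable def cbinom (t : ℂ) (j : ℕ) : ℂ := cfall t j / (Nat.factorial j)

/-- The Hahn kernel `λ_s^{r1,r2}(t; m)` with ambient parameter `m`. -/
noncomputable def hahn (m r1 r2 s : ℕ) (t : ℂ) : ℂ :=
  ∑ j ∈ Finset.range (s + 1),
    (-1 : ℂ) ^ j * cbinom t j * cfall (s : ℂ) j * cfall ((m : ℂ) - s + 1) j /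
      (cfall ((m : ℂ) - r1) j * cfall (r2 : ℂ) j)

/-- The Hahn weight `ω^{r1,r2}(k; m)`, extended by `0` outside of the natural range. -/
noncomputable def hahnWeight (m r1 r2 : ℕ) (k : ℤ) : ℂ :=
  if 0 ≤ k ∧ k ≤ (r2 : ℤ) ∧ 0 ≤ (r1 : ℤ) - r2 + k ∧ k ≤ (m : ℤ) - r1 then
    (m.factorial : ℂ) /
      ((k.toNat.factorial : ℂ) * ((r2 - k.toNat).factorial : ℂ) *
        (((r1 : ℤ) - r2 + k).toNat.factorial : ℂ) * (((m : ℤ) - r1 - k).toNat.factorial : ℂ))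
  else 0

lemma cfall_succ (z : ℂ) (k : ℕ) : cfall z (k + 1) = cfall z k * (z - k) := by
  simp [cfall, Finset.prod_range_succ]

lemma cfall_zero (z : ℂ) : cfall z 0 = 1 := by simp [cfall]

lemma cfall_succ' (z : ℂ) (k : ℕ) : cfall z (k + 1) = z * cfall (z - 1) k := by
  simp only [cfall, Finset.prod_range_succ']
  rw [mul_comm]
  congr 1
  · simp
  · apply Finset.prod_congr rfl
    intro i _
    push_cast
    ring

lemma cfall_add (z : ℂ) (i k : ℕ) : cfall z (i + k) = cfall z i * cfall (z - i) k := by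
  simp only [cfall, Finset.prod_range_add]
  congr 1
  apply Finset.prod_congr rfl
  intro j _
  push_cast
  ring

lemma cfall_nat (a j : ℕ) : cfall (a : ℂ) j = (a.descFactorial j : ℂ) := by
  induction j with
  | zero => simp [cfall]
  | succ j ih =>
    rw [cfall_succ, ih, Nat.descFactorial_succ]
    by_cases h : j ≤ a
    · push_cast [h]; ring
    · rw [Nat.descFactorial_of_lt (by omega)]; simp

noncomputable def FF (s : ℕ) (a b c d : ℂ) : ℂ :=
  ∑ j ∈ Finset.range (s + 1),
    (s.choose j : ℂ) * ((-1) ^ j * (cfall a j * cfall c j * cfall b (s - j) * cfall d (s - j)))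

noncomputable def GG (s : ℕ) (a x y n : ℂ) : ℂ :=
  ∑ i ∈ Finset.range (s + 1),
    (-1) ^ i * (s.choose i : ℂ) * cfall a i * cfall (n - s + 1) i *
      cfall (y - i) (s - i) * cfall (x - i) (s - i)

lemma FF_succ (s : ℕ) (a b c d : ℂ) :
    FF (s + 1) a b c d = b * d * FF s a (b - 1) c (d - 1) - a * c * FF s (a - 1) b (c - 1) d := by
  unfold FF
  rw [Finset.sum_choose_succ_mul (fun j k => (-1 : ℂ) ^ j * (cfall a j * cfall c j * cfall b k * cfall d k)),
    sub_eq_add_neg, Finset.mul_sum, Finset.mul_sum, ← Finset.sum_neg_distrib]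
  rw [add_comm]
  first
  | (congr 1
     · apply Finset.sum_congr rfl
       intro j hj
       have : s + 1 - j = (s - j) + 1 := by have := Finset.mem_range.1 hj; omega
       rw [this, cfall_succ' b, cfall_succ' d]; ring
     · apply Finset.sum_congr rfl
       intro j hj
       rw [cfall_succ' a, cfall_succ' c]; ring)
  | (rw [add_comm]
     congr 1
     · apply Finset.sum_congr rfl
       intro j hj
       have : s + 1 - j = (s - j) + 1 := by have := Finset.mem_range.1 hj; omega
       rw [this, cfall_succ' b, cfall_succ' d]; ring
     · apply Finset.sum_congr rfl
       intro j hj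
       rw [cfall_succ' a, cfall_succ' c]; ring)

lemma GG_succ (s : ℕ) (a x y n : ℂ) :
    GG (s + 1) a x y n = (x - a) * (y - a) * GG s a (x - 1) (y - 1) (n - 2)
      - a * (n - x - y + a) * GG s (a - 1) (x - 1) (y - 1) (n - 2) := by
  let P : ℕ → ℂ := fun i => (-1) ^ i * (s.choose i : ℂ) * cfall a i * cfall (n - s - 1) i *
      cfall (y - i) (s + 1 - i) * cfall (x - i) (s + 1 - i)
  let Q : ℕ → ℂ := fun i => (-1) ^ (i + 1) * (s.choose i : ℂ) * cfall a (i + 1) * (n - i) *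
      cfall (n - s - 1) i * cfall (y - (i + 1)) (s - i) * cfall (x - (i + 1)) (s - i)
  have hR : (x - a) * (y - a) * GG s a (x - 1) (y - 1) (n - 2)
      - a * (n - x - y + a) * GG s (a - 1) (x - 1) (y - 1) (n - 2)
      = ∑ i ∈ Finset.range (s + 1), (P i + Q i) := by
    unfold GG
    rw [Finset.mul_sum, Finset.mul_sum, ← Finset.sum_sub_distrib]
    apply Finset.sum_congr rfl
    intro i hi
    have h1 : s + 1 - i = (s - i) + 1 := by have := Finset.mem_range.1 hi; omega
    have e1 : a * cfall (a - 1) i = cfall a i * (a - i) := by rw [← cfall_succ', cfall_succ]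
    simp only [P, Q]
    rw [h1, cfall_succ' (y - i), cfall_succ' (x - i), cfall_succ a]
    rw [show n - 2 - (s : ℂ) + 1 = n - s - 1 by ring, show y - 1 - (i : ℂ) = y - (i + 1) by ring,
      show x - 1 - (i : ℂ) = x - (i + 1) by ring, show y - (i : ℂ) - 1 = y - (i + 1) by ring,
      show x - (i : ℂ) - 1 = x - (i + 1) by ring]
    linear_combination (-(n - x - y + a) * (-1) ^ i * (s.choose i : ℂ) * cfall (n - s - 1) i *
      cfall (y - (i + 1)) (s - i) * cfall (x - (i + 1)) (s - i)) * e1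
  have hP : ∑ i ∈ Finset.range (s + 1), P i = ∑ i ∈ Finset.range (s + 1), P (i + 1) + P 0 := by
    rw [← Finset.sum_range_succ' P, Finset.sum_range_succ P (s + 1)]
    simp [P]
  rw [hR, Finset.sum_add_distrib, hP]
  unfold GG
  rw [Finset.sum_range_succ', add_right_comm, ← Finset.sum_add_distrib]
  congr 1
  · apply Finset.sum_congr rfl
    intro i hi
    have h0 : i ≤ s := by have := Finset.mem_range.1 hi; omega
    have h1 : s + 1 - (i + 1) = s - i := by omega
    simp only [P, Q]
    have hc : ((s.choose (i + 1) : ℕ) : ℂ) * (i + 1) = s.choose i * ((s : ℂ) - i) := by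
      have := Nat.choose_succ_right_eq s i
      rw [← Nat.cast_sub h0]
      exact_mod_cast this
    rw [h1, Nat.choose_succ_succ, cfall_succ (n - s - 1)]
    push_cast
    rw [show n - ((s : ℂ) + 1) + 1 = n - s by ring, cfall_succ' (n - s)]
    linear_combination ((-1) ^ (i + 1) * cfall a (i + 1) *
      cfall (n - s - 1) i * cfall (y - (i + 1)) (s - i) * cfall (x - (i + 1)) (s - i)) * hc
  · simp [P, cfall_zero]

lemma FF_eq_GG (s : ℕ) : ∀ a b c d : ℂ, FF s a b c d = GG s a (a + b) (a + d) (a + b + c + d) := by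
  induction s with
  | zero => intro a b c d; simp [FF, GG, cfall_zero]
  | succ s ih =>
    intro a b c d
    rw [FF_succ, GG_succ, ih, ih]
    congr 1
    · congr 1
      · ring
      · congr 1 <;> ring
    · congr 1
      · ring
      · congr 1 <;> ring

lemma cfall_nat_ne (a j : ℕ) (h : j ≤ a) : cfall (a : ℂ) j ≠ 0 := by
  rw [cfall_nat]
  exact_mod_cast (Nat.pos_of_ne_zero (by rw [Ne, Nat.descFactorial_eq_zero_iff_lt]; omega)).ne'

lemma hahn_mul (n r1 r2 s : ℕ) (h1 : r1 ≤ n) (hs1 : s ≤ n - r1) (hs2 : s ≤ r2) (t : ℂ) :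
    hahn n r1 r2 s t * (cfall ((n : ℂ) - r1) s * cfall (r2 : ℂ) s)
      = GG s t r2 ((n : ℂ) - r1) n := by
  unfold hahn GG
  rw [Finset.sum_mul]
  apply Finset.sum_congr rfl
  intro i hi
  have h0 : i ≤ s := by have := Finset.mem_range.1 hi; omega
  have n2 := cfall_nat_ne r2 i (by omega)
  have n1 := cfall_nat_ne (n - r1) i (by omega)
  rw [Nat.cast_sub h1] at n1
  have e1 := cfall_add ((n : ℂ) - r1) i (s - i)
  have e2 := cfall_add (r2 : ℂ) i (s - i)
  rw [Nat.add_sub_cancel' h0] at e1 e2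
  have e3 : cfall (s : ℂ) i = i.factorial * s.choose i := by
    rw [cfall_nat, Nat.descFactorial_eq_factorial_mul_choose]; push_cast; rfl
  have n3 : (i.factorial : ℂ) ≠ 0 := by exact_mod_cast i.factorial_ne_zero
  rw [e1, e2, e3, cbinom]
  field_simp

lemma weight_nat (a b c d : ℕ) :
    hahnWeight (a + b + c + d) (b + c) (a + b) (a : ℤ)
      = ((a + b + c + d).factorial : ℂ) /
        (a.factorial * b.factorial * c.factorial * d.factorial) := by
  unfold hahnWeight
  rw [if_pos (by push_cast; omega)]
  have e2 : a + b - (a : ℤ).toNat = b := by omega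
  have e3 : (((b + c : ℕ) : ℤ) - (a + b : ℕ) + a).toNat = c := by omega
  have e4 : (((a + b + c + d : ℕ) : ℤ) - (b + c : ℕ) - a).toNat = d := by omega
  rw [e2, e3, e4, Int.toNat_natCast]

lemma fact_desc (a j : ℕ) (h : j ≤ a) :
    (a.factorial : ℂ) = (a - j).factorial * cfall a j := by
  rw [cfall_nat]; exact_mod_cast (Nat.factorial_mul_descFactorial h).symm

lemma weight_shift (a b c d s j : ℕ) (hj : j ≤ s) (hbc : s ≤ b + c) (hab : s ≤ a + b)
    (had : s ≤ a + d) (hcd : s ≤ c + d) :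
    cfall ((a + b + c + d : ℕ) : ℂ) (2 * s) *
      hahnWeight (a + b + c + d - 2 * s) (b + c - s) (a + b - s) ((a : ℤ) - j)
    = hahnWeight (a + b + c + d) (b + c) (a + b) (a : ℤ) *
      (cfall a j * cfall c j * cfall b (s - j) * cfall d (s - j)) := by
  by_cases h : j ≤ a ∧ j ≤ c ∧ s - j ≤ b ∧ s - j ≤ d
  · obtain ⟨ha, hc, hb, hd⟩ := h
    have hw := weight_nat (a - j) (b - (s - j)) (c - j) (d - (s - j))
    rw [show a - j + (b - (s - j)) + (c - j) + (d - (s - j)) = a + b + c + d - 2 * s by omega,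
      show b - (s - j) + (c - j) = b + c - s by omega,
      show a - j + (b - (s - j)) = a + b - s by omega, Nat.cast_sub ha] at hw
    rw [hw, weight_nat, fact_desc (a + b + c + d) (2 * s) (by omega), fact_desc a j ha,
      fact_desc c j hc, fact_desc b _ hb, fact_desc d _ hd]
    have := cfall_nat_ne a j ha
    have := cfall_nat_ne c j hc
    have := cfall_nat_ne b _ hb
    have := cfall_nat_ne d _ hd
    have hf : ∀ m : ℕ, (m.factorial : ℂ) ≠ 0 := fun m => by exact_mod_cast m.factorial_ne_zero
    have := hf (a - j)
    have := hf (c - j)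
    have := hf (b - (s - j))
    have := hf (d - (s - j))
    field_simp
  · have hz : (cfall (a : ℂ) j * cfall c j * cfall b (s - j) * cfall d (s - j)) = 0 := by
      simp only [cfall_nat, mul_eq_zero, Nat.cast_eq_zero, Nat.descFactorial_eq_zero_iff_lt]
      omega
    rw [hz]
    unfold hahnWeight
    rw [if_neg (by omega)]
    simp

theorem stmt_16 (n r1 r2 s : ℕ) (h1 : r1 ≤ n) (h2 : r2 ≤ n)
    (hs : s ≤ min (min r1 (n - r1)) (min r2 (n - r2))) (k : ℤ) :
    hahnWeight n r1 r2 k * hahn n r1 r2 s (k : ℂ) =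
      (cfall (n : ℂ) (2 * s) / (cfall ((n : ℂ) - r1) s * cfall (r2 : ℂ) s)) *
        ∑ j ∈ Finset.range (s + 1),
          (-1 : ℂ) ^ j * (s.choose j : ℂ) * hahnWeight (n - 2 * s) (r1 - s) (r2 - s) (k - j) := by
  by_cases hk : 0 ≤ k ∧ k ≤ (r2 : ℤ) ∧ 0 ≤ (r1 : ℤ) - r2 + k ∧ k ≤ (n : ℤ) - r1
  · have hn1 := cfall_nat_ne (n - r1) s (by omega)
    rw [Nat.cast_sub h1] at hn1
    have hn2 := cfall_nat_ne r2 s (by omega)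
    have hm := hahn_mul n r1 r2 s h1 (by omega) (by omega) k
    rw [div_mul_eq_mul_div, eq_div_iff (mul_ne_zero hn1 hn2), mul_assoc, hm]
    clear hm hn1 hn2
    obtain ⟨a, rfl⟩ : ∃ a : ℕ, k = a := ⟨k.toNat, by omega⟩
    obtain ⟨b, rfl⟩ : ∃ b : ℕ, r2 = a + b := ⟨r2 - a, by omega⟩
    obtain ⟨c, rfl⟩ : ∃ c : ℕ, r1 = b + c := ⟨r1 - b, by omega⟩
    obtain ⟨d, rfl⟩ : ∃ d : ℕ, n = a + b + c + d := ⟨n - (a + b + c), by omega⟩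
    have hG : GG s ((a : ℤ) : ℂ) ((a + b : ℕ) : ℂ) (((a + b + c + d : ℕ) : ℂ) - (b + c : ℕ))
        ((a + b + c + d : ℕ) : ℂ) = FF s a b c d := by
      rw [FF_eq_GG]
      congr 1 <;> push_cast <;> ring
    rw [hG, FF, Finset.mul_sum, Finset.mul_sum]
    apply Finset.sum_congr rfl
    intro j hj
    have h0 : j ≤ s := by have := Finset.mem_range.1 hj; omega
    have := weight_shift a b c d s j h0 (by omega) (by omega) (by omega) (by omega)
    linear_combination (-((-1 : ℂ) ^ j * (s.choose j : ℂ))) * this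
  · have hl : hahnWeight n r1 r2 k = 0 := by unfold hahnWeight; rw [if_neg hk]
    rw [hl, zero_mul, Finset.sum_eq_zero, mul_zero]
    intro j hj
    have h0 : j ≤ s := by have := Finset.mem_range.1 hj; omega
    have : hahnWeight (n - 2 * s) (r1 - s) (r2 - s) (k - j) = 0 := by
      unfold hahnWeight
      rw [if_neg (by omega)]
    rw [this, mul_zero]
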